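/- arXiv:2401.07536 — 11 statements merged into one kernel-verified Lean document; each statement's English description precedes it below -/
import Mathlib

section
/- Let y_0 be a nondominated point of (P(0)) and let (z*,y*) ∈ S′_{Y_+}(y_0). Then y*(y) ≥ 0 for every y ∈ Y_+. If moreover the Slater condition holds, then y*(y) > 0 for every y ∈ int(Y_+); in particular y* ≠ 0. -/
open Pointwise Filter Topology

namespace Paper

section Defs

variable {E : Type*} [NormedAddCommGroup E] [NormedSpace ℝ E]

/-- The cone hull of a set: all nonnegative multiples of its elements. -/
def coneHull (A : Set E) : Set E := {x | ∃ r : ℝ, 0 ≤ r ∧ ∃ a ∈ A, x = r • a}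

/-- A cone: a nonempty set closed under multiplication by nonnegative scalars. -/
def IsCone (K : Set E) : Prop := K.Nonempty ∧ ∀ r : ℝ, 0 ≤ r → ∀ x ∈ K, r • x ∈ K

/-- A pointed cone: `K ∩ (-K) = {0}`. -/
def IsPointed (K : Set E) : Prop := K ∩ (-K) = {0}

/-- A proper cone: `{0} ≠ K ≠ E`. -/
def IsProper (K : Set E) : Prop := K ≠ {0} ∧ K ≠ Set.univ

/-- A solid cone: nonempty interior. -/
def IsSolid (K : Set E) : Prop := (interior K).Nonempty

/-- The contingent cone to `A` at `w`. -/
def contingentCone (A : Set E) (w : E) : Set E :=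
  {v | Filter.liminf (fun h : ℝ => Metric.infDist (w + h • v) A / h) (𝓝[>] (0:ℝ)) = 0}

end Defs

section SV

variable {X Y Z : Type*}
  [NormedAddCommGroup X] [NormedSpace ℝ X]
  [NormedAddCommGroup Y] [NormedSpace ℝ Y]
  [NormedAddCommGroup Z] [NormedSpace ℝ Z]

/-- The graph of a set-valued map. -/
def graph (Δ : Z → Set Y) : Set (Z × Y) := {p | p.2 ∈ Δ p.1}

/-- The image of a set by a set-valued map. -/
def imageSet (Δ : Z → Set Y) (A : Set Z) : Set Y := ⋃ w ∈ A, Δ w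

/-- The feasible set map `S(z) = {x ∈ Ω : G(x) ∩ (z - Z₊) ≠ ∅}`. -/
def Smap (Ω : Set X) (G : X → Set Z) (Zp : Set Z) (z : Z) : Set X :=
  {x | x ∈ Ω ∧ (G x ∩ ({z} - Zp)).Nonempty}

/-- The value map `V(z) = F(S(z))`. -/
def Vmap (Ω : Set X) (F : X → Set Y) (G : X → Set Z) (Zp : Set Z) (z : Z) : Set Y :=
  ⋃ x ∈ Smap Ω G Zp z, F x

/-- The map `(V + Y₊)(z) = V(z) + Y₊`. -/
def VplusMap (Ω : Set X) (F : X → Set Y) (G : X → Set Z) (Zp : Set Z) (Yp : Set Y)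
    (z : Z) : Set Y :=
  Vmap Ω F G Zp z + Yp

/-- The graph of `V + Y₊`. -/
def GraphVplus (Ω : Set X) (F : X → Set Y) (G : X → Set Z) (Zp : Set Z) (Yp : Set Y) :
    Set (Z × Y) :=
  {p : Z × Y | p.2 ∈ Vmap Ω F G Zp p.1 + Yp}

/-- Minimal points of a set `A` with respect to the cone `Yp`. -/
def MinSet (Yp : Set Y) (A : Set Y) : Set Y :=
  {a ∈ A | A ∩ ({a} - Yp) ⊆ {a} + Yp}

/-- The marginal map `M(z) = Min(V(z))`. -/
def Mmap (Ω : Set X) (F : X → Set Y) (G : X → Set Z) (Zp : Set Z) (Yp : Set Y)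
    (z : Z) : Set Y :=
  MinSet Yp (Vmap Ω F G Zp z)

/-- `y₀` is a nondominated point of `(P(0))`. -/
def Nondominated (Ω : Set X) (F : X → Set Y) (G : X → Set Z) (Zp : Set Z) (Yp : Set Y)
    (y0 : Y) : Prop :=
  y0 ∈ closure (Vmap Ω F G Zp 0) ∧
    Vmap Ω F G Zp 0 ∩ ({y0} - Yp) ⊆ {y0} + Yp

/-- `y₀` is a minimal point of `(P(0))`. -/
def MinimalPoint (Ω : Set X) (F : X → Set Y) (G : X → Set Z) (Zp : Set Z) (Yp : Set Y)
    (y0 : Y) : Prop :=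
  y0 ∈ Vmap Ω F G Zp 0 ∧
    Vmap Ω F G Zp 0 ∩ ({y0} - Yp) ⊆ {y0} + Yp

/-- The set `S_{Y₊}(y₀)` of separating pairs of continuous linear functionals. -/
def Sdual (Ω : Set X) (F : X → Set Y) (G : X → Set Z) (Zp : Set Z) (Yp : Set Y) (y0 : Y) :
    Set ((Z →L[ℝ] ℝ) × (Y →L[ℝ] ℝ)) :=
  {p | (∀ z' ∈ -Zp, ∀ y' ∈ ({y0} : Set Y) - Yp, p.1 z' + p.2 y' ≤ p.2 y0) ∧
       (∀ q ∈ GraphVplus Ω F G Zp Yp, p.2 y0 ≤ p.1 q.1 + p.2 q.2)}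

/-- `P(Z,Y)`: closed convex processes with full domain. -/
def PZY : Set (Z → Set Y) :=
  {Δ | IsClosed (graph Δ) ∧ Convex ℝ (graph Δ) ∧ IsCone (graph Δ) ∧ ∀ z, (Δ z).Nonempty}

/-- The set `Λ_{(z*,y*)}` of processes associated to `(z*,y*)`. -/
def Lambda (zs : Z →L[ℝ] ℝ) (ys : Y →L[ℝ] ℝ) : Set (Z → Set Y) :=
  {Δ | Δ ∈ PZY ∧ graph Δ \ {0} ⊆ {p : Z × Y | 0 < -(zs p.1) + ys p.2}}

/-- The set `Γ_{y₀}` of processes associated to `y₀`. -/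
def Gamma (Ω : Set X) (F : X → Set Y) (G : X → Set Z) (Zp : Set Z) (Yp : Set Y) (y0 : Y) :
    Set (Z → Set Y) :=
  ⋃ p ∈ Sdual Ω F G Zp Yp y0 \ {0}, Lambda p.1 p.2

/-- The Slater constraint qualification. -/
def Slater (Ω : Set X) (F : X → Set Y) (G : X → Set Z) (Zp : Set Z) : Prop :=
  ∃ x1 ∈ Ω, (F x1).Nonempty ∧ (G x1 ∩ (-interior Zp)).Nonempty

/-- `Ψ(Δ) = ∪_{x∈Ω}(F(x) + Δ(G(x)+Z₊))`. -/
def Umap (Ω : Set X) (F : X → Set Y) (G : X → Set Z) (Zp : Set Z) (Δ : Z → Set Y) : Set Y :=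
  ⋃ x ∈ Ω, (F x + imageSet Δ (G x + Zp))

/-- The dual map `Φ(Δ)`: nondominated points of the closure of `Ψ(Δ)`. -/
def Phi (Ω : Set X) (F : X → Set Y) (G : X → Set Z) (Zp : Set Z) (Yp : Set Y)
    (Δ : Z → Set Y) : Set Y :=
  {y ∈ closure (Umap Ω F G Zp Δ) | Umap Ω F G Zp Δ ∩ ({y} - Yp) ⊆ {y} + Yp}

/-- `Δ` is a Lagrange multiplier of `(P(0))` at `y₀`. -/
def LagrangeMultiplier (Ω : Set X) (F : X → Set Y) (G : X → Set Z) (Zp : Set Z) (Yp : Set Y)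
    (Δ : Z → Set Y) (y0 : Y) : Prop :=
  y0 ∈ closure (Umap Ω F G Zp Δ) ∧ Umap Ω F G Zp Δ ∩ ({y0} - Yp) ⊆ {y0} + Yp

/-- The graph of the Lagrange process of `(P(0))` at `y₀`. -/
def GraphLagrange (Ω : Set X) (F : X → Set Y) (G : X → Set Z) (Zp : Set Z) (Yp : Set Y)
    (y0 : Y) : Set (Z × Y) :=
  {p : Z × Y | ∀ q ∈ Sdual Ω F G Zp Yp y0, q.1 p.1 ≤ q.2 p.2}

/-- The Lagrange process of `(P(0))` at `y₀`, as a set-valued map. -/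
def Lagrange (Ω : Set X) (F : X → Set Y) (G : X → Set Z) (Zp : Set Z) (Yp : Set Y) (y0 : Y)
    (z : Z) : Set Y :=
  {y | (z, y) ∈ GraphLagrange Ω F G Zp Yp y0}

/-- The contingent derivative of a set-valued map `H` at `(z₀, y₀)`. -/
def contingentDeriv (H : Z → Set Y) (z0 : Z) (y0 : Y) (z : Z) : Set Y :=
  {y | (z, y) ∈ contingentCone (graph H) (z0, y0)}

/-- The S-derivative (Shi derivative) of a set-valued map `H` at `(z₀, y₀)`. -/
def Sderiv (H : Z → Set Y) (z0 : Z) (y0 : Y) (z : Z) : Set Y :=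
  {y | ∃ (h : ℕ → ℝ) (zn : ℕ → Z) (yn : ℕ → Y),
    (∀ n, 0 < h n) ∧ Filter.Tendsto zn Filter.atTop (𝓝 z) ∧
    Filter.Tendsto yn Filter.atTop (𝓝 y) ∧
    Filter.Tendsto (fun n => h n • zn n) Filter.atTop (𝓝 (0:Z)) ∧
    ∀ n, y0 + h n • yn n ∈ H (z0 + h n • zn n)}

/-- The standing assumptions of the paper: `Y₊`, `Z₊` proper solid convex cones, `Ω` nonempty
convex, `F` is `Y₊`-convex and `G` is `Z₊`-convex. -/
def StandingHyp (Ω : Set X) (F : X → Set Y) (G : X → Set Z) (Zp : Set Z) (Yp : Set Y) : Prop :=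
  IsCone Yp ∧ IsProper Yp ∧ IsSolid Yp ∧ Convex ℝ Yp ∧
  IsCone Zp ∧ IsProper Zp ∧ IsSolid Zp ∧ Convex ℝ Zp ∧
  Ω.Nonempty ∧ Convex ℝ Ω ∧
  Convex ℝ {p : X × Y | p.1 ∈ Ω ∧ p.2 ∈ F p.1 + Yp} ∧
  Convex ℝ {p : X × Z | p.1 ∈ Ω ∧ p.2 ∈ G p.1 + Zp}

end SV

variable {X Y Z : Type*}
  [NormedAddCommGroup X] [NormedSpace ℝ X]
  [NormedAddCommGroup Y] [NormedSpace ℝ Y]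
  [NormedAddCommGroup Z] [NormedSpace ℝ Z]

theorem pos_of_interior {E : Type*} [NormedAddCommGroup E] [NormedSpace ℝ E] (K : Set E)
    (f : E →L[ℝ] ℝ) (hf : ∀ x ∈ K, 0 ≤ f x) (h0 : f ≠ 0) (k : E) (hk : k ∈ interior K) :
    0 < f k := by
  have hk' := hf k (interior_subset hk)
  rcases hk'.lt_or_eq with h | h
  · exact h
  · exfalso
    have hm : IsLocalMin f k := by
      filter_upwards [mem_interior_iff_mem_nhds.1 hk] with x hx
      rw [← h]
      exact hf x hx
    apply h0
    have := hm.fderiv_eq_zero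
    rwa [f.fderiv] at this

theorem stmt_3 (Ω : Set X) (F : X → Set Y) (G : X → Set Z) (Zp : Set Z) (Yp : Set Y)
    (hSt : StandingHyp Ω F G Zp Yp)
    (y0 : Y) (hy0 : Nondominated Ω F G Zp Yp y0)
    (p : (Z →L[ℝ] ℝ) × (Y →L[ℝ] ℝ)) (hp : p ∈ Sdual Ω F G Zp Yp y0 \ {0}) :
    (∀ y ∈ Yp, 0 ≤ p.2 y) ∧
      (Slater Ω F G Zp → (∀ y ∈ interior Yp, 0 < p.2 y) ∧ p.2 ≠ 0) := by
  obtain ⟨⟨hYn, hYc⟩, -, hYs, -, ⟨hZn, hZc⟩, -, -, -, -⟩ := hSt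
  obtain ⟨⟨h1, h2⟩, hne⟩ := hp
  have hY0 : (0 : Y) ∈ Yp := by
    obtain ⟨a, ha⟩ := hYn
    simpa using hYc 0 le_rfl a ha
  have hZ0 : (0 : Z) ∈ Zp := by
    obtain ⟨a, ha⟩ := hZn
    simpa using hZc 0 le_rfl a ha
  have hy : ∀ y ∈ Yp, 0 ≤ p.2 y := by
    intro y hy
    have := h1 0 (by simpa using hZ0) (y0 - y) (Set.sub_mem_sub rfl hy)
    simp only [map_zero, map_sub] at this
    linarith
  have hz : ∀ z ∈ Zp, 0 ≤ p.1 z := by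
    intro z hz
    have := h1 (-z) (by simpa using hz) (y0 - 0) (Set.sub_mem_sub rfl hY0)
    simp only [map_neg, sub_zero] at this
    linarith
  refine ⟨hy, ?_⟩
  rintro ⟨x1, hx1, ⟨w, hw⟩, g, hg, hgi⟩
  have hne2 : p.2 ≠ 0 := by
    intro h0
    have hne1 : p.1 ≠ 0 := fun h => hne (Prod.ext h h0)
    have hpos := pos_of_interior Zp p.1 hz hne1 (-g) hgi
    have hmem : (g, w + 0) ∈ GraphVplus Ω F G Zp Yp := by
      refine Set.add_mem_add ?_ hY0
      refine Set.mem_iUnion₂.2 ⟨x1, ⟨hx1, g, hg, ?_⟩, hw⟩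
      exact ⟨g, rfl, 0, hZ0, sub_zero g⟩
    have := h2 _ hmem
    simp only [h0, map_neg, ContinuousLinearMap.zero_apply] at this hpos
    linarith
  exact ⟨fun y hyi => pos_of_interior Yp p.2 hy hne2 y hyi, hne2⟩

end Paper
end

section
/- Let y_0 be a nondominated point of (P(0)) and assume the Slater condition. Then for every (z*,y*) ∈ S′_{Y_+}(y_0) the set Λ_{(z*,y*)} is nonempty; that is, there exists a closed convex process Δ : Z ⇉ Y with Δ(z) ≠ ∅ for all z ∈ Z and Graph(Δ) ∖ {(0,0)} ⊆ {(z,y) ∈ Z×Y : −z*(z)+y*(y) > 0}. -/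
open Pointwise Filter Topology

namespace Paper

variable {X Y Z : Type*}
  [NormedAddCommGroup X] [NormedSpace ℝ X]
  [NormedAddCommGroup Y] [NormedSpace ℝ Y]
  [NormedAddCommGroup Z] [NormedSpace ℝ Z]

theorem stmt_4 (Ω : Set X) (F : X → Set Y) (G : X → Set Z) (Zp : Set Z) (Yp : Set Y)
    (hSt : StandingHyp Ω F G Zp Yp)
    (y0 : Y) (hy0 : Nondominated Ω F G Zp Yp y0)
    (hSl : Slater Ω F G Zp)
    (p : (Z →L[ℝ] ℝ) × (Y →L[ℝ] ℝ)) (hp : p ∈ Sdual Ω F G Zp Yp y0 \ {0}) :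
    ∃ Δ : Z → Set Y, Δ ∈ PZY ∧
      graph Δ \ {0} ⊆ {q : Z × Y | 0 < -(p.1 q.1) + p.2 q.2} := by
  obtain ⟨⟨h1, h2⟩, hne⟩ := hp
  obtain ⟨zs, ys⟩ := p
  obtain ⟨hY, _, _, _, hZ, _⟩ := hSt
  have hY0 : (0 : Y) ∈ Yp := by
    obtain ⟨⟨x, hx⟩, h⟩ := hY
    simpa using h 0 le_rfl x hx
  have hZ0 : (0 : Z) ∈ Zp := by
    obtain ⟨⟨x, hx⟩, h⟩ := hZ
    simpa using h 0 le_rfl x hx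
  have hys : ys ≠ 0 := by
    rintro rfl
    apply hne
    obtain ⟨x1, hx1, ⟨y1, hy1⟩, z1, hz1, hz1'⟩ := hSl
    have hz1i : -z1 ∈ interior Zp := by simpa using hz1'
    have hmem : (z1, y1) ∈ GraphVplus Ω F G Zp Yp := by
      refine Set.mem_add.2 ⟨y1, ?_, 0, hY0, by simp⟩
      refine Set.mem_iUnion₂.2 ⟨x1, ⟨hx1, z1, hz1, ?_⟩, hy1⟩
      exact Set.mem_sub.2 ⟨z1, rfl, 0, hZ0, by simp⟩
    have hge : 0 ≤ zs z1 := by simpa using h2 _ hmem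
    have hpos : ∀ w ∈ Zp, 0 ≤ zs w := by
      intro w hw
      have := h1 (-w) (by simpa using hw) y0 (Set.mem_sub.2 ⟨y0, rfl, 0, hY0, by simp⟩)
      simpa using this
    have hmin : IsLocalMin zs (-z1) := by
      filter_upwards [mem_interior_iff_mem_nhds.1 hz1i] with w hw
      have := hpos w hw
      rw [map_neg]
      linarith
    have hz : zs = 0 := hmin.hasFDerivAt_eq_zero zs.hasFDerivAt
    simp [hz]
  obtain ⟨e', he'⟩ : ∃ e', ys e' ≠ 0 := by
    by_contra! h
    exact hys (ContinuousLinearMap.ext h)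
  obtain ⟨e, he⟩ : ∃ e, ys e = 1 := ⟨(ys e')⁻¹ • e', by simp [he']⟩
  obtain ⟨ε, hε, hεe⟩ : ∃ ε : ℝ, 0 < ε ∧ ε * ‖e‖ ≤ 1 / 2 := by
    have h0 := norm_nonneg e
    refine ⟨1 / (2 * (‖e‖ + 1)), by positivity, ?_⟩
    rw [div_mul_eq_mul_div, div_le_div_iff₀ (by positivity) (by norm_num)]
    linarith
  refine ⟨fun z => {y | ε * (‖z‖ + ‖y‖) ≤ -(zs z) + ys y}, ⟨?_, ?_, ⟨⟨0, ?_⟩, ?_⟩, ?_⟩, ?_⟩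
  · have hc : IsClosed {q : Z × Y | ε * (‖q.1‖ + ‖q.2‖) ≤ -(zs q.1) + ys q.2} :=
      isClosed_le (by fun_prop) (by fun_prop)
    exact hc
  · rintro ⟨z, y⟩ h ⟨z', y'⟩ h' a b ha hb hab
    simp only [graph, Set.mem_ofPred_eq, Prod.smul_mk, Prod.mk_add_mk, map_add, map_smul,
      smul_eq_mul] at h h' ⊢
    have e1 : ‖a • z + b • z'‖ ≤ a * ‖z‖ + b * ‖z'‖ := by
      refine (norm_add_le _ _).trans ?_
      rw [norm_smul_of_nonneg ha, norm_smul_of_nonneg hb]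
    have e2 : ‖a • y + b • y'‖ ≤ a * ‖y‖ + b * ‖y'‖ := by
      refine (norm_add_le _ _).trans ?_
      rw [norm_smul_of_nonneg ha, norm_smul_of_nonneg hb]
    have e3 := mul_le_mul_of_nonneg_left (add_le_add e1 e2) hε.le
    have e4 := mul_le_mul_of_nonneg_left h ha
    have e5 := mul_le_mul_of_nonneg_left h' hb
    linarith
  · simp [graph]
  · rintro r hr ⟨z, y⟩ h
    simp only [graph, Set.mem_ofPred_eq, Prod.smul_mk, map_smul, smul_eq_mul,
      norm_smul_of_nonneg hr] at h ⊢
    have e4 := mul_le_mul_of_nonneg_left h hr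
    linarith
  · intro z
    have ht : 0 ≤ 2 * (|zs z| + ε * ‖z‖) := by positivity
    refine ⟨(2 * (|zs z| + ε * ‖z‖)) • e, ?_⟩
    simp only [Set.mem_ofPred_eq, map_smul, smul_eq_mul, he, norm_smul_of_nonneg ht]
    have e1 := mul_le_mul_of_nonneg_left hεe ht
    have e2 := le_abs_self (zs z)
    linarith
  · rintro ⟨z, y⟩ ⟨h, h0⟩
    simp only [graph, Set.mem_ofPred_eq] at h ⊢
    refine lt_of_lt_of_le (mul_pos hε ?_) h
    by_contra hle
    have a1 := norm_nonneg z
    have a2 := norm_nonneg y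
    apply h0
    have z0 : z = 0 := norm_eq_zero.1 (by linarith)
    have y0' : y = 0 := norm_eq_zero.1 (by linarith)
    simp [z0, y0']

end Paper
end

section
/- Under the standing convexity assumptions, the set Graph(V+Y_+) := {(z,y) ∈ Z×Y : y ∈ V(z)+Y_+} is convex. -/
open Pointwise Filter Topology

namespace Paper

variable {X Y Z : Type*}
  [NormedAddCommGroup X] [NormedSpace ℝ X]
  [NormedAddCommGroup Y] [NormedSpace ℝ Y]
  [NormedAddCommGroup Z] [NormedSpace ℝ Z]

theorem stmt_6 (Ω : Set X) (F : X → Set Y) (G : X → Set Z) (Zp : Set Z) (Yp : Set Y)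
    (hSt : StandingHyp Ω F G Zp Yp) :
    Convex ℝ (GraphVplus Ω F G Zp Yp) := by
  obtain ⟨-, -, -, -, -, -, -, -, -, -, hF, hG⟩ := hSt
  have key : ∀ p : Z × Y, p ∈ GraphVplus Ω F G Zp Yp ↔
      ∃ x, (x, p.2) ∈ {p : X × Y | p.1 ∈ Ω ∧ p.2 ∈ F p.1 + Yp} ∧
        (x, p.1) ∈ {p : X × Z | p.1 ∈ Ω ∧ p.2 ∈ G p.1 + Zp} := by
    rintro ⟨z, y⟩
    constructor
    · intro h
      obtain ⟨v, hv, k, hk, hvk⟩ := Set.mem_add.1 (show y ∈ Vmap Ω F G Zp z + Yp from h)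
      obtain ⟨x, ⟨hx, g, hg, hgz⟩, hvx⟩ := Set.mem_iUnion₂.1 hv
      obtain ⟨z', hz', c, hc, hzc⟩ := Set.mem_sub.1 hgz
      rw [Set.mem_singleton_iff] at hz'
      subst hz'
      refine ⟨x, ⟨hx, Set.mem_add.2 ⟨v, hvx, k, hk, hvk⟩⟩,
        ⟨hx, Set.mem_add.2 ⟨g, hg, c, hc, ?_⟩⟩⟩
      rw [← hzc]
      simp
    · rintro ⟨x, ⟨hx, hy⟩, ⟨-, hz⟩⟩
      obtain ⟨v, hv, k, hk, hvk⟩ := Set.mem_add.1 hy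
      obtain ⟨g, hg, c, hc, hgc⟩ := Set.mem_add.1 hz
      refine Set.mem_add.2 ⟨v, Set.mem_iUnion₂.2 ⟨x, ⟨hx, g, hg, ?_⟩, hv⟩, k, hk, hvk⟩
      refine Set.mem_sub.2 ⟨z, rfl, c, hc, ?_⟩
      have h2 : g + c = z := hgc
      rw [← h2]
      simp
  intro p hp q hq a b ha hb hab
  obtain ⟨x₁, h1, h2⟩ := (key p).1 hp
  obtain ⟨x₂, h3, h4⟩ := (key q).1 hq
  exact (key _).2 ⟨a • x₁ + b • x₂, hF h1 h3 ha hb hab, hG h2 h4 ha hb hab⟩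

end Paper
end

section
/- Let y_0 be a nondominated point of (P(0)). Then (0, y_0) belongs to the boundary of Graph(V+Y_+): one has (0, y_0) ∈ cl(Graph(V+Y_+)) and (0, y_0) ∉ int(Graph(V+Y_+)). -/
open Pointwise Filter Topology

namespace Paper

variable {X Y Z : Type*}
  [NormedAddCommGroup X] [NormedSpace ℝ X]
  [NormedAddCommGroup Y] [NormedSpace ℝ Y]
  [NormedAddCommGroup Z] [NormedSpace ℝ Z]

theorem small_step {W : Type*} [NormedAddCommGroup W] [NormedSpace ℝ W] (A : Set W) (a w : W)
    (ha : a ∈ interior A) : ∃ t : ℝ, 0 < t ∧ a + t • w ∈ A := by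
    have hc : Tendsto (fun t : ℝ => a + t • w) (𝓝[>] 0) (𝓝 a) := by
      have : Continuous (fun t : ℝ => a + t • w) := by fun_prop
      have h := this.tendsto 0
      simp only [zero_smul, add_zero] at h
      exact h.mono_left nhdsWithin_le_nhds
    have h1 := hc.eventually (mem_interior_iff_mem_nhds.mp ha)
    obtain ⟨t, ht, ht'⟩ := (h1.and self_mem_nhdsWithin).exists
    exact ⟨t, ht', ht⟩

theorem stmt_7 (Ω : Set X) (F : X → Set Y) (G : X → Set Z) (Zp : Set Z) (Yp : Set Y)
    (hSt : StandingHyp Ω F G Zp Yp)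
    (y0 : Y) (hy0 : Nondominated Ω F G Zp Yp y0) :
    ((0:Z), y0) ∈ closure (GraphVplus Ω F G Zp Yp) ∧
      ((0:Z), y0) ∉ interior (GraphVplus Ω F G Zp Yp) := by
  obtain ⟨⟨hYne, hYc⟩, ⟨-, hYu⟩, ⟨k, hk⟩, hYconv, -⟩ := hSt
  obtain ⟨hcl, hdom⟩ := hy0
  have h0 : (0 : Y) ∈ Yp := by
    obtain ⟨a, ha⟩ := hYne
    simpa using hYc 0 le_rfl a ha
  have hadd : ∀ a ∈ Yp, ∀ b ∈ Yp, a + b ∈ Yp := by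
    intro a ha b hb
    have h := hYconv ha hb (a := 1/2) (b := 1/2) (by norm_num) (by norm_num) (by norm_num)
    have h2 := hYc 2 (by norm_num) _ h
    simpa [smul_add, smul_smul] using h2
  constructor
  · have hc : Continuous (fun y : Y => ((0 : Z), y)) := by fun_prop
    refine map_mem_closure hc hcl ?_
    intro v hv
    exact ⟨v, hv, 0, h0, add_zero v⟩
  · intro hint
    obtain ⟨t, ht, hmem⟩ := small_step _ _ ((0 : Z), -k) hint
    have hm : y0 + t • (-k) ∈ Vmap Ω F G Zp 0 + Yp := by
      simpa [GraphVplus] using hmem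
    obtain ⟨v, hv, p, hp, hvp⟩ := hm
    have hvp' : v + p = y0 + t • (-k) := hvp
    have hkY : k ∈ Yp := interior_subset hk
    have hv2 : v ∈ ({y0} : Set Y) + Yp := by
      refine hdom ⟨hv, y0, rfl, p + t • k, hadd _ hp _ (hYc t ht.le k hkY), ?_⟩
      change y0 - (p + t • k) = v
      rw [eq_sub_of_add_eq hvp', smul_neg]
      abel
    obtain ⟨y, rfl, q, hq, hyq⟩ := hv2
    have hyq' : y + q = v := hyq
    have hneg : -k ∈ Yp := by
      have h := hYc t⁻¹ (inv_nonneg.mpr ht.le) _ (hadd _ hq _ hp)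
      have e : q + p = t • (-k) := by
        rw [← hyq', add_assoc] at hvp'
        exact add_left_cancel hvp'
      rwa [e, inv_smul_smul₀ ht.ne'] at h
    apply hYu
    ext w
    simp only [Set.mem_univ, iff_true]
    obtain ⟨s, hs, hw⟩ := small_step _ _ w hk
    have h := hYc s⁻¹ (inv_nonneg.mpr hs.le) _ (hadd _ hw _ hneg)
    have e : k + s • w + -k = s • w := by abel
    rwa [e, inv_smul_smul₀ hs.ne'] at h

end Paper
end

section
/- Let y_0 be a nondominated point of (P(0)). Then S_{Y_+}(y_0) is a convex cone in Z*×Y* containing a nonzero element; in particular S′_{Y_+}(y_0) := S_{Y_+}(y_0) ∖ {(0,0)} is nonempty. -/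
open Pointwise Filter Topology

namespace Paper

variable {X Y Z : Type*}
  [NormedAddCommGroup X] [NormedSpace ℝ X]
  [NormedAddCommGroup Y] [NormedSpace ℝ Y]
  [NormedAddCommGroup Z] [NormedSpace ℝ Z]

theorem cone_add {E : Type*} [NormedAddCommGroup E] [NormedSpace ℝ E] {K : Set E}
    (hc : IsCone K) (hv : Convex ℝ K) {a b : E} (ha : a ∈ K) (hb : b ∈ K) : a + b ∈ K := by
  have h := hv (hc.2 2 (by norm_num) a ha) (hc.2 2 (by norm_num) b hb)
    (show (0:ℝ) ≤ 1/2 by norm_num) (show (0:ℝ) ≤ 1/2 by norm_num) (by norm_num)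
  simpa [smul_smul] using h

theorem cone_zero {E : Type*} [NormedAddCommGroup E] [NormedSpace ℝ E] {K : Set E}
    (hc : IsCone K) : (0 : E) ∈ K := by
  obtain ⟨x, hx⟩ := hc.1
  simpa using hc.2 0 le_rfl x hx

theorem cone_add_int {E : Type*} [NormedAddCommGroup E] [NormedSpace ℝ E] {K : Set E}
    (hc : IsCone K) (hv : Convex ℝ K) {a b : E} (ha : a ∈ K) (hb : b ∈ interior K) :
    a + b ∈ interior K := by
  have h : a + b ∈ interior (K + K) := subset_interior_add_right (Set.add_mem_add ha hb)
  refine interior_mono ?_ h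
  rintro _ ⟨x, hx, y, hy, rfl⟩
  exact cone_add hc hv hx hy

theorem cone_smul_int {E : Type*} [NormedAddCommGroup E] [NormedSpace ℝ E] {K : Set E}
    (hc : IsCone K) {t : ℝ} (ht : 0 < t) {b : E} (hb : b ∈ interior K) :
    t • b ∈ interior K := by
  have h : t • b ∈ interior (t • K) := by
    rw [interior_smul₀ ht.ne']
    exact Set.smul_mem_smul_set hb
  refine interior_mono ?_ h
  rintro _ ⟨x, hx, rfl⟩
  exact hc.2 t ht.le x hx

theorem cone_zero_int {E : Type*} [NormedAddCommGroup E] [NormedSpace ℝ E] {K : Set E}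
    (hc : IsCone K) (h0 : (0 : E) ∈ interior K) : K = Set.univ := by
  refine Set.eq_univ_of_forall fun x => ?_
  have hn : K ∈ 𝓝 (0 : E) := mem_interior_iff_mem_nhds.1 h0
  have hT : Tendsto (fun t : ℝ => t • x) (𝓝[>] 0) (𝓝 (0 : E)) := by
    have : Tendsto (fun t : ℝ => t • x) (𝓝 0) (𝓝 ((0 : ℝ) • x)) :=
      (continuous_id.smul continuous_const).tendsto 0
    rw [zero_smul] at this
    exact this.mono_left nhdsWithin_le_nhds
  obtain ⟨t, ht, htp⟩ := ((hT.eventually hn).and self_mem_nhdsWithin).exists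
  have htp : (0 : ℝ) < t := htp
  have := hc.2 t⁻¹ (inv_nonneg.2 htp.le) _ ht
  rwa [smul_smul, inv_mul_cancel₀ htp.ne', one_smul] at this

theorem mem_graph_iff (Ω : Set X) (F : X → Set Y) (G : X → Set Z) (Zp : Set Z) (Yp : Set Y)
    (q : Z × Y) : q ∈ GraphVplus Ω F G Zp Yp ↔
      ∃ x ∈ Ω, q.1 ∈ G x + Zp ∧ q.2 ∈ F x + Yp := by
  simp only [GraphVplus, Vmap, Smap, Set.mem_ofPred_eq, Set.mem_add, Set.mem_iUnion]
  constructor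
  · rintro ⟨v, ⟨x, ⟨hx, g, hg, z, hz, k, hk, e⟩, hv⟩, w, hw, e'⟩
    rw [Set.mem_singleton_iff] at hz
    subst hz
    refine ⟨x, hx, ⟨g, hg, k, hk, ?_⟩, v, hv, w, hw, e'⟩
    simp [← e]
  · rintro ⟨x, hx, ⟨g, hg, k, hk, e⟩, v, hv, w, hw, e'⟩
    refine ⟨v, ⟨x, ⟨hx, g, hg, q.1, rfl, k, hk, ?_⟩, hv⟩, w, hw, e'⟩
    simp [← e]

theorem graph_convex {Ω : Set X} {F : X → Set Y} {G : X → Set Z} {Zp : Set Z} {Yp : Set Y}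
    (hSt : StandingHyp Ω F G Zp Yp) : Convex ℝ (GraphVplus Ω F G Zp Yp) := by
  obtain ⟨-, -, -, -, -, -, -, -, -, -, hF, hG⟩ := hSt
  intro p hp q hq a b ha hb hab
  rw [mem_graph_iff] at hp hq ⊢
  obtain ⟨x, hx, h1, h2⟩ := hp
  obtain ⟨x', hx', h1', h2'⟩ := hq
  have A := hF (x := (x, p.2)) ⟨hx, h2⟩ (y := (x', q.2)) ⟨hx', h2'⟩ ha hb hab
  have B := hG (x := (x, p.1)) ⟨hx, h1⟩ (y := (x', q.1)) ⟨hx', h1'⟩ ha hb hab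
  exact ⟨a • x + b • x', A.1, B.2, A.2⟩

theorem stmt_8 (Ω : Set X) (F : X → Set Y) (G : X → Set Z) (Zp : Set Z) (Yp : Set Y)
    (hSt : StandingHyp Ω F G Zp Yp)
    (y0 : Y) (hy0 : Nondominated Ω F G Zp Yp y0) :
    Convex ℝ (Sdual Ω F G Zp Yp y0) ∧ IsCone (Sdual Ω F G Zp Yp y0) ∧
      ∃ p ∈ Sdual Ω F G Zp Yp y0, p ≠ 0 := by
  refine ⟨?_, ⟨⟨0, ?_⟩, ?_⟩, ?_⟩
  · rintro p ⟨hp1, hp2⟩ q ⟨hq1, hq2⟩ a b ha hb hab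
    refine ⟨fun z hz y hy => ?_, fun r hr => ?_⟩
    · have h1 := mul_le_mul_of_nonneg_left (hp1 z hz y hy) ha
      have h2 := mul_le_mul_of_nonneg_left (hq1 z hz y hy) hb
      simp
      linarith
    · have h1 := mul_le_mul_of_nonneg_left (hp2 r hr) ha
      have h2 := mul_le_mul_of_nonneg_left (hq2 r hr) hb
      simp
      linarith
  · exact ⟨fun z hz y hy => by simp, fun r hr => by simp⟩
  · rintro a ha p ⟨hp1, hp2⟩
    refine ⟨fun z hz y hy => ?_, fun r hr => ?_⟩
    · have h1 := mul_le_mul_of_nonneg_left (hp1 z hz y hy) ha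
      simp
      linarith
    · have h1 := mul_le_mul_of_nonneg_left (hp2 r hr) ha
      simp
      linarith
  · have hB := graph_convex hSt
    obtain ⟨cY, pY, ⟨d, hd⟩, vY, cZ, pZ, ⟨e, he⟩, vZ, -⟩ := hSt
    obtain ⟨hcl, hnd⟩ := hy0
    let A : Set (Z × Y) := {p | -p.1 ∈ interior Zp ∧ y0 - p.2 ∈ interior Yp}
    have hAo : IsOpen A :=
      (isOpen_interior.preimage (by fun_prop : Continuous fun p : Z × Y => -p.1)).inter
        (isOpen_interior.preimage (by fun_prop : Continuous fun p : Z × Y => y0 - p.2))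
    have hAc : Convex ℝ A := by
      rintro p ⟨h1, h2⟩ q ⟨h1', h2'⟩ a b ha hb hab
      have k1 := vZ.interior h1 h1' ha hb hab
      have k2 := vY.interior h2 h2' ha hb hab
      refine ⟨?_, ?_⟩
      · convert k1 using 1
        simp
        abel
      · convert k2 using 1
        have : y0 = a • y0 + b • y0 := by rw [← add_smul, hab, one_smul]
        simp only [Prod.snd_add, Prod.smul_snd, smul_sub]
        nth_rw 1 [this]
        abel
    have hdis : Disjoint A (GraphVplus Ω F G Zp Yp) := by
      rw [Set.disjoint_left]
      rintro p ⟨h1, h2⟩ hp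
      rw [mem_graph_iff] at hp
      obtain ⟨x, hx, ⟨g, hg, k, hk, e1⟩, v, hv, w, hw, e2⟩ := hp
      simp only at e1 e2
      have hvV : v ∈ Vmap Ω F G Zp 0 := by
        simp only [Vmap, Smap, Set.mem_iUnion]
        refine ⟨x, ⟨hx, g, hg, 0, rfl, k + -p.1, cone_add cZ vZ hk (interior_subset h1), ?_⟩, hv⟩
        simp [← e1]
      have hint : y0 - v ∈ interior Yp := by
        have := cone_add_int cY vY hw h2
        rw [← e2] at this
        convert this using 1
        abel
      obtain ⟨a, ha, k', hk', e3⟩ := hnd ⟨hvV, y0, rfl, y0 - v, interior_subset hint, by simp⟩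
      rw [Set.mem_singleton_iff] at ha
      subst ha
      simp only at e3
      have := cone_add_int cY vY hk' hint
      rw [← e3] at this
      apply pY.2
      apply cone_zero_int cY
      convert this using 1
      abel
    obtain ⟨f, u, hfA, hfB⟩ := geometric_hahn_banach_open hAc hAo hB hdis
    have hsplit : ∀ z y, f (z, y) = f (z, 0) + f (0, y) := fun z y => by
      rw [← map_add]; simp
    have hle : ∀ z ∈ Zp, ∀ k ∈ Yp, f (-z, y0 - k) ≤ u := by
      intro z hz k hk
      have hT : Tendsto (fun t : ℝ => f (-(z + t • e), y0 - (k + t • d))) (𝓝[>] 0)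
          (𝓝 (f (-z, y0 - k))) := by
        have : Continuous (fun t : ℝ => f (-(z + t • e), y0 - (k + t • d))) := by fun_prop
        have := this.tendsto 0
        simp only [zero_smul, add_zero] at this
        exact this.mono_left nhdsWithin_le_nhds
      refine le_of_tendsto hT ?_
      filter_upwards [self_mem_nhdsWithin] with t ht
      refine (hfA _ ⟨?_, ?_⟩).le
      · simpa using cone_add_int cZ vZ hz (cone_smul_int cZ ht he)
      · simpa using cone_add_int cY vY hk (cone_smul_int cY ht hd)
    have hV : ∀ v ∈ Vmap Ω F G Zp 0, ((0 : Z), v) ∈ GraphVplus Ω F G Zp Yp := fun v hv =>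
      ⟨v, hv, 0, cone_zero cY, by simp⟩
    have hge : u ≤ f (0, y0) := by
      have hc : IsClosed {y : Y | u ≤ f (0, y)} :=
        isClosed_le continuous_const (by fun_prop)
      exact closure_minimal (fun v hv => hfB _ (hV v hv)) hc hcl
    have hle0 : f (0, y0) ≤ u := by
      simpa using hle 0 (cone_zero cZ) 0 (cone_zero cY)
    refine ⟨(f.comp (ContinuousLinearMap.inl ℝ Z Y), f.comp (ContinuousLinearMap.inr ℝ Z Y)),
      ⟨?_, ?_⟩, ?_⟩
    · rintro z hz y ⟨a, ha, k, hk, rfl⟩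
      rw [Set.mem_singleton_iff] at ha
      subst ha
      have := hle (-z) hz k hk
      rw [neg_neg, hsplit] at this
      simpa using this.trans hge
    · intro q hq
      have := hle0.trans (hfB q hq)
      have h3 := hsplit q.1 q.2
      rw [Prod.mk.eta] at h3
      rw [h3] at this
      simpa using this
    · intro h0
      rw [Prod.mk_eq_zero] at h0
      have hz : ∀ q, f q = 0 := fun q => by
        have h1 := DFunLike.congr_fun h0.1 q.1
        have h2 := DFunLike.congr_fun h0.2 q.2
        simp at h1 h2
        rw [show q = (q.1, q.2) from rfl, hsplit, h1, h2, add_zero]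
      have h1 := hfA (-e, y0 - d) ⟨by simpa using he, by simpa using hd⟩
      rw [hz] at h1
      rw [hz] at hge
      linarith

end Paper
end

section
/- Let y_0 be a nondominated point of (P(0)), let Δ ∈ Γ_{y_0}, and assume the Slater condition. Then Δ is a Lagrange multiplier of (P(0)) at y_0: writing U_Δ := ∪_{x∈Ω}(F(x)+Δ(G(x)+Z_+)), one has y_0 ∈ cl(U_Δ) and U_Δ ∩ (y_0−Y_+) ⊆ y_0+Y_+. -/
open Pointwise Filter Topology

namespace Paper

variable {X Y Z : Type*}
  [NormedAddCommGroup X] [NormedSpace ℝ X]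
  [NormedAddCommGroup Y] [NormedSpace ℝ Y]
  [NormedAddCommGroup Z] [NormedSpace ℝ Z]

theorem stmt_9 (Ω : Set X) (F : X → Set Y) (G : X → Set Z) (Zp : Set Z) (Yp : Set Y)
    (hSt : StandingHyp Ω F G Zp Yp)
    (y0 : Y) (hy0 : Nondominated Ω F G Zp Yp y0)
    (Δ : Z → Set Y) (hΔ : Δ ∈ Gamma Ω F G Zp Yp y0)
    (hSl : Slater Ω F G Zp) :
    y0 ∈ closure (Umap Ω F G Zp Δ) ∧
      Umap Ω F G Zp Δ ∩ ({y0} - Yp) ⊆ {y0} + Yp := by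
  obtain ⟨⟨hYne, hYs⟩, -, -, -, ⟨hZne, hZs⟩, -⟩ := hSt
  have hY0 : (0 : Y) ∈ Yp := by
    obtain ⟨a, ha⟩ := hYne
    simpa using hYs 0 le_rfl a ha
  have hZ0 : (0 : Z) ∈ Zp := by
    obtain ⟨a, ha⟩ := hZne
    simpa using hZs 0 le_rfl a ha
  obtain ⟨hcl, hnd⟩ := hy0
  simp only [Gamma, Set.mem_iUnion] at hΔ
  obtain ⟨⟨zs, ys⟩, ⟨⟨hS1, hS2⟩, -⟩, ⟨-, -, ⟨⟨q, hq⟩, hcone⟩, -⟩, hΔ⟩ := hΔ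
  have h00 : (0 : Y) ∈ Δ 0 := by
    have := hcone 0 le_rfl q hq
    rw [zero_smul] at this
    exact this
  refine ⟨closure_mono ?_ hcl, ?_⟩
  · intro y hy
    simp only [Vmap, Set.mem_iUnion] at hy
    obtain ⟨x, ⟨hx, g, hg, a, ha, k, hk, hgk⟩, hy⟩ := hy
    rw [Set.mem_singleton_iff] at ha
    subst ha
    simp only [Umap, Set.mem_iUnion]
    refine ⟨x, hx, y, hy, 0, ?_, add_zero y⟩
    simp only [imageSet, Set.mem_iUnion]
    refine ⟨0, ⟨g, hg, k, hk, ?_⟩, h00⟩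
    simp only at hgk ⊢
    rw [← hgk]; abel
  · rintro u ⟨hu, hu2⟩
    have hu3 := hu2
    obtain ⟨a, ha, k, hk, hak⟩ := hu2
    rw [Set.mem_singleton_iff] at ha
    subst ha
    simp only [Umap, Set.mem_iUnion] at hu
    obtain ⟨x, hx, f, hf, d, hd, hfd⟩ := hu
    simp only [imageSet, Set.mem_iUnion] at hd
    obtain ⟨w, ⟨g, hg, c, hc, hgc⟩, hd⟩ := hd
    simp only at hak hfd hgc
    have hV : f ∈ Vmap Ω F G Zp w := by
      simp only [Vmap, Set.mem_iUnion]
      refine ⟨x, ⟨hx, g, hg, w, rfl, c, hc, ?_⟩, hf⟩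
      simp only
      rw [← hgc]; abel
    by_cases h0 : (w, d) = (0 : Z × Y)
    · obtain ⟨rfl, rfl⟩ := Prod.mk.inj h0
      rw [add_zero] at hfd
      subst hfd
      exact hnd ⟨hV, hu3⟩
    · exfalso
      have h1 := hΔ (show (w, d) ∈ graph Δ \ {0} from ⟨hd, h0⟩)
      have h2 := hS2 (w, f) ⟨f, hV, 0, hY0, add_zero f⟩
      have h3 := hS1 0 (by simpa using hZ0) (a - k) ⟨a, rfl, k, hk, rfl⟩
      have h4 := congrArg ys (hfd.trans hak.symm)
      simp only [Set.mem_setOf_eq, map_zero, map_add, map_sub] at h1 h2 h3 h4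
      linarith

end Paper
end

section
/- Let y_0 be a nondominated point of (P(0)), let Δ ∈ Γ_{y_0}, assume the Slater condition, and suppose moreover that y_0 is a minimal point of (P(0)) achieved at a feasible solution x_0, i.e. x_0 ∈ Ω, G(x_0) ∩ (−Z_+) ≠ ∅, and y_0 ∈ F(x_0). Then, writing U_Δ := ∪_{x∈Ω}(F(x)+Δ(G(x)+Z_+)), one has y_0 ∈ F(x_0)+Δ(G(x_0)+Z_+) ⊆ U_Δ, the set U_Δ satisfies U_Δ ∩ (y_0−Y_+) ⊆ y_0+Y_+, and Δ(G(x_0)+Z_+) ∩ (−Y_+) ⊆ (−Y_+) ∩ Y_+. -/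
open Pointwise Filter Topology

namespace Paper

variable {X Y Z : Type*}
  [NormedAddCommGroup X] [NormedSpace ℝ X]
  [NormedAddCommGroup Y] [NormedSpace ℝ Y]
  [NormedAddCommGroup Z] [NormedSpace ℝ Z]

theorem stmt_10 (Ω : Set X) (F : X → Set Y) (G : X → Set Z) (Zp : Set Z) (Yp : Set Y)
    (hSt : StandingHyp Ω F G Zp Yp)
    (y0 : Y) (hy0 : Nondominated Ω F G Zp Yp y0)
    (Δ : Z → Set Y) (hΔ : Δ ∈ Gamma Ω F G Zp Yp y0)
    (hSl : Slater Ω F G Zp)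
    (x0 : X) (hx0Ω : x0 ∈ Ω) (hx0feas : (G x0 ∩ (-Zp)).Nonempty) (hy0F : y0 ∈ F x0) :
    y0 ∈ F x0 + imageSet Δ (G x0 + Zp) ∧
      F x0 + imageSet Δ (G x0 + Zp) ⊆ Umap Ω F G Zp Δ ∧
      Umap Ω F G Zp Δ ∩ ({y0} - Yp) ⊆ {y0} + Yp ∧
      imageSet Δ (G x0 + Zp) ∩ (-Yp) ⊆ (-Yp) ∩ Yp := by
  obtain ⟨hYc, -, -, -, hZc, -⟩ := hSt
  simp only [Gamma, Set.mem_iUnion] at hΔ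
  obtain ⟨p, ⟨⟨hp1, hp2⟩, -⟩, ⟨-, -, hΔc, -⟩, hΔs⟩ := hΔ
  have hY0 : (0 : Y) ∈ Yp := by
    obtain ⟨a, ha⟩ := hYc.1
    simpa using hYc.2 0 le_rfl a ha
  have hZ0 : (0 : Z) ∈ Zp := by
    obtain ⟨a, ha⟩ := hZc.1
    simpa using hZc.2 0 le_rfl a ha
  have hΔ0 : (0 : Y) ∈ Δ 0 := by
    obtain ⟨a, ha⟩ := hΔc.1
    have h := hΔc.2 0 le_rfl a ha
    rw [zero_smul] at h
    exact h
  have hpos : ∀ y ∈ Yp, 0 ≤ p.2 y := by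
    intro y hy
    have h := hp1 0 (by simpa using hZ0) (y0 - y) (Set.sub_mem_sub rfl hy)
    simp only [map_zero, map_sub] at h
    linarith
  have h2 : F x0 + imageSet Δ (G x0 + Zp) ⊆ Umap Ω F G Zp Δ := by
    intro u hu
    exact Set.mem_biUnion hx0Ω hu
  have h3 : Umap Ω F G Zp Δ ∩ ({y0} - Yp) ⊆ {y0} + Yp := by
    rintro u ⟨hu, huY⟩
    have huY' := huY
    obtain ⟨a, ha, q, hq, hqe⟩ := Set.mem_sub.1 huY
    rw [Set.mem_singleton_iff] at ha
    subst ha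
    simp only [Umap, Set.mem_iUnion] at hu
    obtain ⟨x, hx, hu⟩ := hu
    obtain ⟨f, hf, d, hd, hfd⟩ := Set.mem_add.1 hu
    simp only [imageSet, Set.mem_iUnion] at hd
    obtain ⟨w, hw, hd⟩ := hd
    obtain ⟨g, hg, k, hk, hgk⟩ := Set.mem_add.1 hw
    have hV : f ∈ Vmap Ω F G Zp w := by
      refine Set.mem_biUnion (show x ∈ Smap Ω G Zp w from ⟨hx, g, hg, ?_⟩) hf
      exact Set.mem_sub.2 ⟨w, rfl, k, hk, by rw [← hgk]; abel⟩
    have hle := hp2 (w, f) (show f ∈ Vmap Ω F G Zp w + Yp from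
      Set.mem_add.2 ⟨f, hV, 0, hY0, add_zero f⟩)
    have hz : (w, d) = (0 : Z × Y) := by
      by_contra hne
      have h := hΔs (show (w, d) ∈ graph Δ \ {0} from ⟨hd, hne⟩)
      simp only [Set.mem_setOf_eq] at h
      have hq' := hpos q hq
      have he : p.2 f + p.2 d = p.2 a - p.2 q := by
        rw [← map_add, ← map_sub, hfd, hqe]
      simp only at hle
      linarith
    obtain ⟨rfl, rfl⟩ := Prod.mk.inj hz
    rw [add_zero] at hfd
    subst hfd
    exact hy0.2 ⟨hV, huY'⟩
  refine ⟨?_, h2, h3, ?_⟩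
  · obtain ⟨g, hg, hgn⟩ := hx0feas
    refine Set.mem_add.2 ⟨y0, hy0F, 0, ?_, add_zero y0⟩
    exact Set.mem_biUnion (Set.mem_add.2 ⟨g, hg, -g, hgn, add_neg_cancel g⟩) hΔ0
  · rintro d ⟨hd, hdn⟩
    refine ⟨hdn, ?_⟩
    have h := h3 ⟨h2 (Set.add_mem_add hy0F hd),
      Set.mem_sub.2 ⟨y0, rfl, -d, hdn, by abel⟩⟩
    obtain ⟨a, ha, b, hb, hab⟩ := Set.mem_add.1 h
    rw [Set.mem_singleton_iff] at ha
    subst ha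
    rwa [← add_left_cancel hab]

end Paper
end

section
/- (Weak duality.) Let y_0 be a nondominated point of (P(0)). For every closed convex process Δ : Z ⇉ Y with Δ(z) ≠ ∅ for all z, define Ψ(Δ) := ∪_{x∈Ω}(F(x)+Δ(G(x)+Z_+)) and Φ(Δ) := {y ∈ cl(Ψ(Δ)) : Ψ(Δ) ∩ (y−Y_+) ⊆ y+Y_+}. Then there is no Δ ∈ P(Z,Y) and no y_1 ∈ Φ(Δ) such that y_1 − y_0 ∈ int(Y_+). -/
open Pointwise Filter Topology

namespace Paper

variable {X Y Z : Type*}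
  [NormedAddCommGroup X] [NormedSpace ℝ X]
  [NormedAddCommGroup Y] [NormedSpace ℝ Y]
  [NormedAddCommGroup Z] [NormedSpace ℝ Z]

theorem stmt_11 (Ω : Set X) (F : X → Set Y) (G : X → Set Z) (Zp : Set Z) (Yp : Set Y)
    (hSt : StandingHyp Ω F G Zp Yp)
    (y0 : Y) (hy0 : Nondominated Ω F G Zp Yp y0) :
    ¬ ∃ Δ ∈ (PZY : Set (Z → Set Y)), ∃ y1 ∈ Phi Ω F G Zp Yp Δ,
        y1 - y0 ∈ interior Yp := by
  rintro ⟨Δ, ⟨-, -, hcone, -⟩, y1, ⟨-, hy1⟩, hint⟩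
  obtain ⟨⟨-, hYc⟩, ⟨-, hYne⟩, -, hYconv, -⟩ := hSt
  have h00 : (0 : Y) ∈ Δ 0 := by
    obtain ⟨⟨p, hp⟩, hc⟩ := hcone
    have := hc 0 le_rfl p hp
    simpa [graph] using this
  have hsub : Vmap Ω F G Zp 0 ⊆ Umap Ω F G Zp Δ := by
    intro v hv
    simp only [Vmap, Set.mem_iUnion] at hv
    obtain ⟨x, ⟨hx, g, hg, hg'⟩, hvx⟩ := hv
    obtain ⟨a, ha, b, hb, hab⟩ := Set.mem_sub.1 hg'
    rw [Set.mem_singleton_iff] at ha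
    simp only [Umap, Set.mem_iUnion]
    refine ⟨x, hx, Set.mem_add.2 ⟨v, hvx, 0, ?_, add_zero v⟩⟩
    simp only [imageSet, Set.mem_iUnion]
    refine ⟨0, Set.mem_add.2 ⟨g, hg, b, hb, ?_⟩, h00⟩
    rw [← hab, ha]; simp
  have hadd : ∀ a ∈ Yp, ∀ b ∈ Yp, a + b ∈ Yp := by
    intro a ha b hb
    have h := hYc 2 (by norm_num) _
      (hYconv ha hb (by norm_num : (0:ℝ) ≤ 1/2) (by norm_num : (0:ℝ) ≤ 1/2) (by norm_num))
    have e : (2:ℝ) • ((1/2:ℝ) • a + (1/2:ℝ) • b) = a + b := by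
      rw [smul_add, smul_smul, smul_smul]; norm_num
    rwa [e] at h
  have hopen : IsOpen ((fun v : Y => y1 - v) ⁻¹' interior Yp) :=
    isOpen_interior.preimage (by fun_prop)
  obtain ⟨v, hv1, hv2⟩ := mem_closure_iff.1 hy0.1 _ hopen hint
  have hv1' : y1 - v ∈ interior Yp := hv1
  have hmem : v ∈ ({y1} : Set Y) + Yp :=
    hy1 ⟨hsub hv2, Set.mem_sub.2 ⟨y1, rfl, y1 - v, interior_subset hv1', by simp⟩⟩
  obtain ⟨a, ha, b, hb, hab⟩ := Set.mem_add.1 hmem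
  rw [Set.mem_singleton_iff] at ha
  subst ha
  apply hYne
  rw [Set.eq_univ_iff_forall]
  intro w
  have hcont : Tendsto (fun t : ℝ => (a - v) + t • w) (𝓝[>] 0) (𝓝 (a - v)) := by
    have : Continuous (fun t : ℝ => (a - v) + t • w) := by fun_prop
    have h := this.tendsto 0
    simp only [zero_smul, add_zero] at h
    exact h.mono_left nhdsWithin_le_nhds
  have hev := hcont.eventually (isOpen_interior.mem_nhds hv1')
  obtain ⟨t, ht, htpos⟩ := (hev.and self_mem_nhdsWithin).exists
  have htpos' : (0:ℝ) < t := htpos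
  have h1 := hadd _ (interior_subset ht) _ hb
  have e : (a - v) + t • w + b = t • w := by rw [← hab]; abel
  rw [e] at h1
  have h2 := hYc t⁻¹ (by positivity) _ h1
  rwa [smul_smul, inv_mul_cancel₀ htpos'.ne', one_smul] at h2

end Paper
end

section
/- Let Y_+ additionally be pointed, let y_0 be a minimal point of (P(0)), let L_{y_0} be the Lagrange process of (P(0)) at y_0, and assume the Slater condition. Then L_{y_0}(−z) = D(V+Y_+)(0,y_0)(z) for every z ∈ Z, where D(V+Y_+)(0,y_0) is the contingent derivative of the set-valued map V+Y_+ at (0, y_0). -/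
open Pointwise Filter Topology

namespace Paper

variable {X Y Z : Type*}
  [NormedAddCommGroup X] [NormedSpace ℝ X]
  [NormedAddCommGroup Y] [NormedSpace ℝ Y]
  [NormedAddCommGroup Z] [NormedSpace ℝ Z]

theorem mem_GVp (Ω : Set X) (F : X → Set Y) (G : X → Set Z) (Zp : Set Z) (Yp : Set Y)
    (p : Z × Y) : p ∈ GraphVplus Ω F G Zp Yp ↔
      ∃ x, (x ∈ Ω ∧ p.2 ∈ F x + Yp) ∧ (x ∈ Ω ∧ p.1 ∈ G x + Zp) := by
  simp only [GraphVplus, Vmap, Smap, Set.mem_setOf_eq, Set.mem_add, Set.mem_iUnion]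
  constructor
  · rintro ⟨f, ⟨x, ⟨hx, g, hg, hg'⟩, hf⟩, k, hk, hfk⟩
    obtain ⟨a, ha, b, hb, hab⟩ := Set.mem_sub.1 hg'
    rw [Set.mem_singleton_iff] at ha
    subst ha
    exact ⟨x, ⟨hx, f, hf, k, hk, hfk⟩, hx, g, hg, b, hb, by rw [← hab]; abel⟩
  · rintro ⟨x, ⟨hx, f, hf, k, hk, hfk⟩, -, g, hg, b, hb, hgb⟩
    refine ⟨f, ⟨x, ⟨hx, g, hg, Set.mem_sub.2 ⟨p.1, rfl, b, hb, ?_⟩⟩, hf⟩, k, hk, hfk⟩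
    rw [← hgb]; abel

theorem convex_GVp (Ω : Set X) (F : X → Set Y) (G : X → Set Z) (Zp : Set Z) (Yp : Set Y)
    (h1 : Convex ℝ {p : X × Y | p.1 ∈ Ω ∧ p.2 ∈ F p.1 + Yp})
    (h2 : Convex ℝ {p : X × Z | p.1 ∈ Ω ∧ p.2 ∈ G p.1 + Zp}) :
    Convex ℝ (GraphVplus Ω F G Zp Yp) := by
  intro p hp q hq a b ha hb hab
  rw [mem_GVp] at hp hq ⊢
  obtain ⟨x, hx1, hx2⟩ := hp
  obtain ⟨x', hx1', hx2'⟩ := hq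
  refine ⟨a • x + b • x', ?_, ?_⟩
  · exact h1 (x := (x, p.2)) hx1 (y := (x', q.2)) hx1' ha hb hab
  · exact h2 (x := (x, p.1)) hx2 (y := (x', q.1)) hx2' ha hb hab

theorem mem_contingent {E : Type*} [NormedAddCommGroup E] [NormedSpace ℝ E] (A : Set E)
    (hA : Convex ℝ A) (w : E) (hw : w ∈ A) (v : E) :
    v ∈ contingentCone A w ↔ ∀ f : E →L[ℝ] ℝ, (∀ a ∈ A, f w ≤ f a) → 0 ≤ f v := by
  constructor
  · intro hv f hf
    have hv : Filter.liminf (fun h : ℝ => Metric.infDist (w + h • v) A / h) (𝓝[>] (0:ℝ)) = 0 := hv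
    by_contra! hneg
    have key : ∀ h : ℝ, 0 < h → -f v ≤ ‖f‖ * (Metric.infDist (w + h • v) A / h) := by
      intro h hh
      rw [mul_div_assoc', le_div_iff₀ hh]
      by_contra! hc
      have hf0 : 0 < ‖f‖ := by
        rw [norm_pos_iff]; rintro rfl; simp at hneg
      have : Metric.infDist (w + h • v) A < (-f v * h) / ‖f‖ := by
        rw [lt_div_iff₀ hf0]; linarith
      obtain ⟨a, ha, had⟩ := (Metric.infDist_lt_iff ⟨w, hw⟩).1 this
      rw [lt_div_iff₀ hf0, dist_eq_norm] at had
      have h3 := (abs_le.1 ((Real.norm_eq_abs _) ▸ f.le_opNorm (w + h • v - a))).1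
      have h4 := hf a ha
      simp only [map_sub, map_add, map_smul, smul_eq_mul] at h3
      nlinarith
    have hf0 : 0 < ‖f‖ := by
      rw [norm_pos_iff]; rintro rfl; simp at hneg
    have hev : ∀ᶠ h : ℝ in 𝓝[>] 0, -f v / ‖f‖ ≤ Metric.infDist (w + h • v) A / h := by
      filter_upwards [self_mem_nhdsWithin] with h hh
      rw [div_le_iff₀ hf0, mul_comm]; exact key h hh
    have hub : ∀ᶠ h : ℝ in 𝓝[>] 0, Metric.infDist (w + h • v) A / h ≤ ‖v‖ := by
      filter_upwards [self_mem_nhdsWithin] with h hh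
      have hh : 0 < h := hh
      rw [div_le_iff₀ hh]
      refine (Metric.infDist_le_dist_of_mem hw).trans ?_
      rw [dist_eq_norm, add_sub_cancel_left, norm_smul, Real.norm_eq_abs, abs_of_pos hh, mul_comm]
    have := Filter.le_liminf_of_le
      (Filter.IsBoundedUnder.isCoboundedUnder_ge ⟨‖v‖, by simpa using hub⟩) hev
    rw [hv] at this
    have h5 : 0 < -f v / ‖f‖ := div_pos (by linarith) hf0
    linarith
  · intro H
    have hB : Convex ℝ ((fun a => -w + a) '' A) := hA.translate (-w)
    have hcl : v ∈ closure (hB.toCone : Set E) := by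
      by_contra hv
      obtain ⟨f, u, hfv, hfu⟩ := geometric_hahn_banach_point_closed
        (hB.toCone.convex.closure) isClosed_closure hv
      have h0 : u < 0 := by
        have : (0:E) ∈ (hB.toCone : Set E) := by
          refine (hB.mem_toCone).2 ⟨1, one_pos, 0, ⟨w, hw, by simp⟩, by simp⟩
        simpa using hfu 0 (subset_closure this)
      have := H f (fun a ha => by
        by_contra! hc
        have hd : 0 < f w - f a := by linarith
        have hr : 0 < -u / (f w - f a) := div_pos (by linarith) hd
        have hm : (-u / (f w - f a)) • (-w + a) ∈ (hB.toCone : Set E) :=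
          (hB.mem_toCone).2 ⟨_, hr, _, ⟨a, ha, rfl⟩, rfl⟩
        have h6 := hfu _ (subset_closure hm)
        simp only [map_add, map_neg, map_smul, smul_eq_mul] at h6
        have : -u / (f w - f a) * (-f w + f a) = u := by field_simp; ring
        linarith)
      linarith
    have ht : Tendsto (fun h : ℝ => Metric.infDist (w + h • v) A / h) (𝓝[>] (0:ℝ)) (𝓝 0) := by
      rw [Metric.tendsto_nhds]
      intro ε hε
      obtain ⟨c, hc, hcd⟩ := Metric.mem_closure_iff.1 hcl ε hε
      obtain ⟨r, hr, _, ⟨a, ha, rfl⟩, rfl⟩ := (hB.mem_toCone).1 hc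
      filter_upwards [Ioo_mem_nhdsGT (show (0:ℝ) < 1 / r by positivity)] with h hh
      obtain ⟨hh, hh1⟩ := hh
      rw [lt_div_iff₀ hr] at hh1
      have hmem : w + (h * r) • (-w + a) ∈ A := by
        have := hA hw ha (a := 1 - h * r) (b := h * r) (by linarith) (by positivity) (by ring)
        convert this using 1
        module
      rw [Real.dist_eq, sub_zero, abs_of_nonneg (div_nonneg Metric.infDist_nonneg hh.le),
        div_lt_iff₀ hh]
      refine (Metric.infDist_le_dist_of_mem hmem).trans_lt ?_
      rw [dist_add_left, mul_smul, dist_smul₀, Real.norm_eq_abs, abs_of_pos hh, mul_comm]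
      exact mul_lt_mul_of_pos_right hcd hh
    exact ht.liminf_eq

theorem stmt_13 (Ω : Set X) (F : X → Set Y) (G : X → Set Z) (Zp : Set Z) (Yp : Set Y)
    (hSt : StandingHyp Ω F G Zp Yp)
    (hYpPointed : IsPointed Yp)
    (y0 : Y) (hy0 : MinimalPoint Ω F G Zp Yp y0)
    (hSl : Slater Ω F G Zp) :
    ∀ z : Z, Lagrange Ω F G Zp Yp y0 (-z) =
      contingentDeriv (VplusMap Ω F G Zp Yp) 0 y0 z := by
  obtain ⟨hY, -, -, hYc, hZ, -, -, hZc, -, -, h1, h2⟩ := hSt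
  have hY0 : (0:Y) ∈ Yp := by
    obtain ⟨x, hx⟩ := hY.1
    simpa using hY.2 0 le_rfl x hx
  have haddZ : ∀ x ∈ Zp, ∀ y ∈ Zp, x + y ∈ Zp := by
    intro x hx y hy
    have := hZ.2 2 (by norm_num) _ (hZc hx hy (a := 1/2) (b := 1/2) (by norm_num) (by norm_num) (by norm_num))
    convert this using 1
    module
  have hw : ((0:Z), y0) ∈ GraphVplus Ω F G Zp Yp :=
    Set.mem_add.2 ⟨y0, hy0.1, 0, hY0, by simp⟩
  have hA := convex_GVp Ω F G Zp Yp h1 h2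
  have hshift : ∀ k ∈ Zp, ∀ l ∈ Yp, (k, y0 + l) ∈ GraphVplus Ω F G Zp Yp := by
    intro k hk l hl
    obtain ⟨x, ⟨hx, -⟩, -, hg⟩ := (mem_GVp Ω F G Zp Yp _).1 hw
    have hy := hy0.1
    simp only [Vmap, Smap, Set.mem_iUnion] at hy
    obtain ⟨x, ⟨hx, g, hg, hg'⟩, hf⟩ := hy
    obtain ⟨a, ha, b, hb, hab⟩ := Set.mem_sub.1 hg'
    rw [Set.mem_singleton_iff] at ha
    subst ha
    refine (mem_GVp Ω F G Zp Yp _).2 ⟨x, ⟨hx, Set.mem_add.2 ⟨y0, hf, l, hl, rfl⟩⟩, hx,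
      Set.mem_add.2 ⟨g, hg, b + k, haddZ _ hb _ hk, ?_⟩⟩
    rw [← hab]; simp
  intro z
  ext y
  change (∀ q ∈ Sdual Ω F G Zp Yp y0, q.1 (-z) ≤ q.2 y) ↔
    (z, y) ∈ contingentCone (GraphVplus Ω F G Zp Yp) (0, y0)
  rw [mem_contingent _ hA _ hw]
  constructor
  · intro H f hf
    have hsplit : ∀ (a : Z) (b : Y), f (a, b) =
        f.comp (ContinuousLinearMap.inl ℝ Z Y) a + f.comp (ContinuousLinearMap.inr ℝ Z Y) b := by
      intro a b
      simp [← map_add]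
    have := H (f.comp (ContinuousLinearMap.inl ℝ Z Y), f.comp (ContinuousLinearMap.inr ℝ Z Y)) ?_
    · rw [hsplit]
      simp only [map_neg] at this
      linarith
    · have h2 : ∀ q ∈ GraphVplus Ω F G Zp Yp, f.comp (ContinuousLinearMap.inr ℝ Z Y) y0 ≤
          f.comp (ContinuousLinearMap.inl ℝ Z Y) q.1 +
          f.comp (ContinuousLinearMap.inr ℝ Z Y) q.2 := by
        rintro ⟨a, b⟩ hq
        have := hf _ hq
        rw [hsplit, hsplit, map_zero, zero_add] at this
        exact this
      refine ⟨?_, h2⟩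
      intro z' hz' y' hy'
      obtain ⟨c, hc, l, hl, rfl⟩ := Set.mem_sub.1 hy'
      rw [Set.mem_singleton_iff] at hc
      subst hc
      have := h2 _ (hshift (-z') hz' l hl)
      simp only [map_neg, map_add] at this
      simp only [map_sub]
      linarith
  · intro H q hq
    have := H (q.1.comp (ContinuousLinearMap.fst ℝ Z Y) + q.2.comp (ContinuousLinearMap.snd ℝ Z Y))
      (fun a ha => by simpa using hq.2 a ha)
    simp at this
    rw [map_neg]
    linarith

end Paper
end

section
/- Let Y_+ additionally be pointed, let y_0 be a minimal point of (P(0)), let L_{y_0} be the Lagrange process of (P(0)) at y_0, and assume the Slater condition. Define L^-_{y_0}(z) := L_{y_0}(−z). Then Graph(L^-_{y_0}) equals the positive polar cone S_{Y_+}(y_0)^+ := {(z,y) ∈ Z×Y : z*(z)+y*(y) ≥ 0 for all (z*,y*) ∈ S_{Y_+}(y_0)}, and both sets equal cl(cone(Graph(V+Y_+) − (0, y_0))). -/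
open Pointwise Filter Topology

namespace Paper

variable {X Y Z : Type*}
  [NormedAddCommGroup X] [NormedSpace ℝ X]
  [NormedAddCommGroup Y] [NormedSpace ℝ Y]
  [NormedAddCommGroup Z] [NormedSpace ℝ Z]

theorem aux_mem (Ω : Set X) (F : X → Set Y) (G : X → Set Z) (Zp : Set Z) (Yp : Set Y)
    (p : Z × Y) : p ∈ GraphVplus Ω F G Zp Yp ↔
      ∃ x ∈ Ω, p.1 ∈ G x + Zp ∧ p.2 ∈ F x + Yp := by
  constructor
  · rintro ⟨f, hf, w, hw, h⟩
    simp only [Vmap, Set.mem_iUnion] at hf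
    obtain ⟨x, ⟨hx, g, hg, z, hz, k, hk, e⟩, hfx⟩ := hf
    refine ⟨x, hx, ⟨g, hg, k, hk, ?_⟩, ⟨f, hfx, w, hw, h⟩⟩
    rw [Set.mem_singleton_iff] at hz
    subst hz
    simp only at e ⊢
    rw [← e]; abel
  · rintro ⟨x, hx, ⟨g, hg, k, hk, e⟩, ⟨f, hfx, w, hw, h⟩⟩
    refine ⟨f, ?_, w, hw, h⟩
    simp only [Vmap, Set.mem_iUnion]
    refine ⟨x, ⟨hx, g, hg, p.1, rfl, k, hk, ?_⟩, hfx⟩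
    simp only at e ⊢
    rw [← e]; abel

theorem aux_convex {E : Type*} [NormedAddCommGroup E] [NormedSpace ℝ E] {A : Set E}
    (hA : Convex ℝ A) : Convex ℝ (coneHull A) := by
  rintro _ ⟨r, hr, a, ha, rfl⟩ _ ⟨s, hs, b, hb, rfl⟩ t u ht hu htu
  have h1 := mul_nonneg ht hr
  have h2 := mul_nonneg hu hs
  rcases (add_nonneg h1 h2).eq_or_lt with h | h
  · refine ⟨0, le_rfl, a, ha, ?_⟩
    have e1 : t * r = 0 := by linarith
    have e2 : u * s = 0 := by linarith
    simp [smul_smul, e1, e2]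
  · refine ⟨t * r + u * s, h.le, _, hA ha hb (div_nonneg h1 h.le) (div_nonneg h2 h.le)
      (by field_simp), ?_⟩
    rw [smul_add, smul_smul, smul_smul, smul_smul, smul_smul, mul_div_cancel₀ _ h.ne',
      mul_div_cancel₀ _ h.ne']

theorem stmt_14 (Ω : Set X) (F : X → Set Y) (G : X → Set Z) (Zp : Set Z) (Yp : Set Y)
    (hSt : StandingHyp Ω F G Zp Yp)
    (hYpPointed : IsPointed Yp)
    (y0 : Y) (hy0 : MinimalPoint Ω F G Zp Yp y0)
    (hSl : Slater Ω F G Zp) :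
    {p : Z × Y | (-p.1, p.2) ∈ GraphLagrange Ω F G Zp Yp y0} =
        {p : Z × Y | ∀ q ∈ Sdual Ω F G Zp Yp y0, 0 ≤ q.1 p.1 + q.2 p.2} ∧
      {p : Z × Y | (-p.1, p.2) ∈ GraphLagrange Ω F G Zp Yp y0} =
        closure (coneHull (GraphVplus Ω F G Zp Yp - {(((0:Z), y0) : Z × Y)})) := by
  have hfirst : {p : Z × Y | (-p.1, p.2) ∈ GraphLagrange Ω F G Zp Yp y0} =
        {p : Z × Y | ∀ q ∈ Sdual Ω F G Zp Yp y0, 0 ≤ q.1 p.1 + q.2 p.2} := by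
    ext p
    simp only [GraphLagrange, Set.mem_setOf_eq, map_neg]
    exact forall₂_congr fun q _ => ⟨fun h => by linarith, fun h => by linarith⟩
  refine ⟨hfirst, hfirst.trans ?_⟩
  obtain ⟨hY, -, -, hYc, hZ, -, -, hZc, -, hΩ, hF, hG⟩ := hSt
  have hY0 : (0 : Y) ∈ Yp := by
    obtain ⟨⟨k, hk⟩, h⟩ := hY
    simpa using h 0 le_rfl k hk
  have hZ0 : (0 : Z) ∈ Zp := by
    obtain ⟨⟨k, hk⟩, h⟩ := hZ
    simpa using h 0 le_rfl k hk
  have hadd : ∀ z ∈ Zp, ∀ y ∈ Yp, (z, y0 + y) ∈ GraphVplus Ω F G Zp Yp := by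
    intro z hz y hy
    have h0 := hy0.1
    simp only [Vmap, Set.mem_iUnion] at h0
    obtain ⟨x, ⟨hx, g, hg, z0, hz0, k, hk, e⟩, hfx⟩ := h0
    rw [Set.mem_singleton_iff] at hz0
    subst hz0
    refine (aux_mem ..).2 ⟨x, hx, ⟨g, hg, k + z, ?_, ?_⟩, ⟨y0, hfx, y, hy, rfl⟩⟩
    · have := hZ.2 2 (by norm_num) _ (hZc hk hz (a := 1/2) (b := 1/2)
        (by norm_num) (by norm_num) (by norm_num))
      simpa [smul_smul] using this
    · simp only at e ⊢
      rw [← e]; abel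
  have hconv : Convex ℝ (GraphVplus Ω F G Zp Yp) := by
    intro p hp q hq a b ha hb hab
    obtain ⟨x, hx, h1, h2⟩ := (aux_mem ..).1 hp
    obtain ⟨x', hx', h1', h2'⟩ := (aux_mem ..).1 hq
    have A := @hF (x, p.2) ⟨hx, h2⟩ (x', q.2) ⟨hx', h2'⟩ a b ha hb hab
    have B := @hG (x, p.1) ⟨hx, h1⟩ (x', q.1) ⟨hx', h1'⟩ a b ha hb hab
    exact (aux_mem ..).2 ⟨_, A.1, B.2, A.2⟩
  have hbase : ((0 : Z), y0) ∈ GraphVplus Ω F G Zp Yp := by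
    simpa using hadd 0 hZ0 0 hY0
  set A : Set (Z × Y) := GraphVplus Ω F G Zp Yp - {((0 : Z), y0)} with hAdef
  have hAmem : ∀ q ∈ GraphVplus Ω F G Zp Yp, q - ((0 : Z), y0) ∈ A :=
    fun q hq => ⟨q, hq, _, rfl, rfl⟩
  have hAconv : Convex ℝ A := hconv.sub (convex_singleton _)
  apply Set.Subset.antisymm
  · intro p hp
    by_contra hn
    obtain ⟨f, u, hfp, hfu⟩ := geometric_hahn_banach_point_closed
      (aux_convex hAconv).closure isClosed_closure hn
    have hu : u < 0 := by
      have := hfu 0 (subset_closure ⟨0, le_rfl, _, hAmem _ hbase, by simp⟩)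
      simpa using this
    have hpos : ∀ a ∈ A, 0 ≤ f a := by
      intro a ha
      by_contra hneg
      push Not at hneg
      have := hfu ((u / f a) • a)
        (subset_closure ⟨u / f a, (div_pos_of_neg_of_neg hu hneg).le, a, ha, rfl⟩)
      rw [map_smul, smul_eq_mul, div_mul_cancel₀ _ hneg.ne] at this
      exact lt_irrefl _ this
    have hsplit : ∀ z y, f (z, y) = f (z, 0) + f (0, y) := by
      intro z y
      rw [← map_add]; simp
    have key := hp (f.comp (ContinuousLinearMap.inl ℝ Z Y),
      f.comp (ContinuousLinearMap.inr ℝ Z Y)) ?_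
    · simp only [ContinuousLinearMap.comp_apply, ContinuousLinearMap.inl_apply,
        ContinuousLinearMap.inr_apply] at key
      rw [← hsplit] at key
      have : f p < u := hfp
      have e : f (p.1, p.2) = f p := rfl
      linarith
    · have h2 : ∀ q ∈ GraphVplus Ω F G Zp Yp, f (0, y0) ≤ f (q.1, 0) + f (0, q.2) := by
        intro q hq
        have := hpos _ (hAmem q hq)
        rw [map_sub] at this
        have e : f q = _ := hsplit q.1 q.2
        linarith
      refine ⟨?_, fun q hq => by simpa using h2 q hq⟩
      rintro z hz _ ⟨y1, hy1, y, hy, rfl⟩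
      rw [Set.mem_singleton_iff] at hy1
      subst hy1
      have := h2 _ (hadd (-z) hz y hy)
      have e1 : f (-z, 0) = - f (z, 0) := by rw [← map_neg]; simp
      have e2 : f (0, y1 + y) = f (0, y1) + f (0, y) := by rw [← map_add]; simp
      have e3 : f (0, y1 - y) = f (0, y1) - f (0, y) := by rw [← map_sub]; simp
      simp only [ContinuousLinearMap.comp_apply, ContinuousLinearMap.inl_apply,
        ContinuousLinearMap.inr_apply]
      simp only [e1, e2] at this
      rw [e3]
      linarith
  · apply closure_minimal
    · rintro _ ⟨r, hr, _, ⟨q, hq, _, hb, rfl⟩, rfl⟩ s hs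
      rw [Set.mem_singleton_iff] at hb
      subst hb
      have := hs.2 q hq
      have h : 0 ≤ r * (s.1 q.1 + s.2 q.2 - s.2 y0) := mul_nonneg hr (by linarith)
      simp only [Prod.smul_fst, Prod.smul_snd, Prod.fst_sub, Prod.snd_sub, map_smul, map_sub,
        smul_eq_mul, map_zero]
      linarith
    · simp only [Set.setOf_forall]
      refine isClosed_iInter fun q => isClosed_iInter fun _ => ?_
      exact isClosed_le continuous_const (by fun_prop)

end Paper
end

section
/- Let Y_+ additionally be pointed, let y_0 be a minimal point of (P(0)) with y_0 ∈ F(x_0) for some feasible x_0 (x_0 ∈ Ω with G(x_0) ∩ (−Z_+) ≠ ∅), let L_{y_0} be the Lagrange process of (P(0)) at y_0, and assume that L_{y_0} is a Lagrange multiplier of (P(0)) at y_0. Then L_{y_0}(0) ∩ (−Y_+) = {0}. -/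
open Pointwise Filter Topology

namespace Paper

variable {X Y Z : Type*}
  [NormedAddCommGroup X] [NormedSpace ℝ X]
  [NormedAddCommGroup Y] [NormedSpace ℝ Y]
  [NormedAddCommGroup Z] [NormedSpace ℝ Z]

theorem stmt_16 (Ω : Set X) (F : X → Set Y) (G : X → Set Z) (Zp : Set Z) (Yp : Set Y)
    (hSt : StandingHyp Ω F G Zp Yp)
    (hYpPointed : IsPointed Yp)
    (y0 : Y) (hy0 : MinimalPoint Ω F G Zp Yp y0)
    (x0 : X) (hx0Ω : x0 ∈ Ω) (hx0feas : (G x0 ∩ (-Zp)).Nonempty) (hy0F : y0 ∈ F x0)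
    (hLM : LagrangeMultiplier Ω F G Zp Yp (Lagrange Ω F G Zp Yp y0) y0) :
    Lagrange Ω F G Zp Yp y0 0 ∩ (-Yp) = {0} := by
  obtain ⟨z0, hz0, hz0'⟩ := hx0feas
  ext y
  constructor
  · rintro ⟨hyL, hyn⟩
    have hU : y0 + y ∈ Umap Ω F G Zp (Lagrange Ω F G Zp Yp y0) := by
      refine Set.mem_iUnion₂.2 ⟨x0, hx0Ω, Set.add_mem_add hy0F ?_⟩
      exact Set.mem_iUnion₂.2 ⟨0, Set.mem_add.2 ⟨z0, hz0, -z0, hz0', by simp⟩, hyL⟩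
    have hm : y0 + y ∈ ({y0} : Set Y) - Yp :=
      Set.mem_sub.2 ⟨y0, rfl, -y, hyn, by simp⟩
    obtain ⟨a, ha, b, hb, hab⟩ := Set.mem_add.1 (hLM.2 ⟨hU, hm⟩)
    rw [Set.mem_singleton_iff] at ha
    subst ha
    have hby : b = y := add_left_cancel hab
    subst hby
    rw [← hYpPointed]
    exact ⟨hb, hyn⟩
  · intro hy
    rw [Set.mem_singleton_iff] at hy
    subst hy
    refine ⟨fun q _ => by simp, ?_⟩
    have h0 : (0 : Y) ∈ Yp ∩ (-Yp) := by rw [hYpPointed]; rfl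
    exact h0.2
end Paper
end
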